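/- arXiv:1303.0084 — 3 statements merged into one kernel-verified Lean document; each statement's English description precedes it below -/
import Mathlib

section
/- Let F be a field of characteristic zero and let H ⊆ F^{n²} be a set with the following hitting property: for every pair of tuples A, B of r matrices of size n×n over F and every ℓ ∈ {1,…,n²}, if the polynomial f_ℓ(A, x) − f_ℓ(B, x) ∈ F[x_1,…,x_ℓ] is nonzero, then there exists α ∈ H such that f_ℓ(A, (α_1,…,α_ℓ)) ≠ f_ℓ(B, (α_1,…,α_ℓ)). Then the set T_H := { A ↦ f_ℓ(A, (α_1,…,α_ℓ)) : α ∈ H, ℓ ∈ {1,…,n²} } is a set of separating invariants: every element of T_H lies in F[M]^{GL_n(F)}, and for all tuples A, B of r matrices of size n×n over F, there exists f ∈ F[M]^{GL_n(F)} with f(A) ≠ f(B) if and only if there exists f' ∈ T_H with f'(A) ≠ f'(B). -/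
/-- For a tuple `A = (A_0,…,A_{r−1})` of `n×n` matrices over `R`, the polynomial
`f_ℓ(A, x) := tr(A(x_1) ⋯ A(x_ℓ))` where `A(x) := Σ_{i<r} A_i x^i`. -/
noncomputable def fpoly {R : Type*} [CommRing R] (n r ℓ : ℕ)
    (A : Fin r → Matrix (Fin n) (Fin n) R) : MvPolynomial (Fin ℓ) R :=
  Matrix.trace
    (List.ofFn fun j : Fin ℓ =>
      ∑ i : Fin r, (A i).map fun a => MvPolynomial.C a * MvPolynomial.X j ^ (i : ℕ)).prod

/-- The generic `n×n` matrix `M_i` whose entries are the indeterminates `X (i, a, b)`. -/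
noncomputable def genMat (F : Type*) [Field F] (n r : ℕ) (i : Fin r) :
    Matrix (Fin n) (Fin n) (MvPolynomial (Fin r × Fin n × Fin n) F) :=
  Matrix.of fun a b => MvPolynomial.X (i, a, b)

/-- A polynomial `f` in the `n²r` entries of the tuple `M = (M_0,…,M_{r−1})` of generic
matrices is invariant under simultaneous conjugation if
`f(M_0,…,M_{r−1}) = f(PM_0P⁻¹,…,PM_{r−1}P⁻¹)` as polynomials, for every `P ∈ GL_n(F)`. -/
def IsSimConjInvariant (F : Type*) [Field F] (n r : ℕ)
    (f : MvPolynomial (Fin r × Fin n × Fin n) F) : Prop :=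
  ∀ P : GL (Fin n) F,
    MvPolynomial.aeval
      (fun v : Fin r × Fin n × Fin n =>
        ((((P : Matrix (Fin n) (Fin n) F)).map MvPolynomial.C * genMat F n r v.1 *
            (((P⁻¹ : GL (Fin n) F) : Matrix (Fin n) (Fin n) F)).map MvPolynomial.C :
          Matrix (Fin n) (Fin n) (MvPolynomial (Fin r × Fin n × Fin n) F)))
          v.2.1 v.2.2) f = f

/-- Evaluation of a polynomial in the entries of the generic tuple at a concrete tuple. -/
noncomputable def evalTuple {F : Type*} [Field F] {n r : ℕ}
    (A : Fin r → Matrix (Fin n) (Fin n) F)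
    (f : MvPolynomial (Fin r × Fin n × Fin n) F) : F :=
  MvPolynomial.eval (fun v => A v.1 v.2.1 v.2.2) f

/-- `f_ℓ(M, α)` as a polynomial in the entries of the generic tuple `M`:
`tr(M(α_1) ⋯ M(α_ℓ))` where `M(α_j) := Σ_{i<r} α_j^i M_i`. -/
noncomputable def fAtPoint (F : Type*) [Field F] (n r ℓ : ℕ) (α : Fin ℓ → F) :
    MvPolynomial (Fin r × Fin n × Fin n) F :=
  Matrix.trace
    (List.ofFn fun j : Fin ℓ => ∑ i : Fin r, (α j ^ (i : ℕ)) • genMat F n r i).prod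

/-- The set `T_H` of invariants obtained by evaluating `f_ℓ(M, ·)`, `ℓ ∈ {1,…,n²}`, at
(the first `ℓ` coordinates of) the points of `H`. -/
def TH (F : Type*) [Field F] (n r : ℕ) (H : Set (Fin (n ^ 2) → F)) :
    Set (MvPolynomial (Fin r × Fin n × Fin n) F) :=
  { g | ∃ (ℓ : ℕ) (_ : 1 ≤ ℓ) (h2 : ℓ ≤ n ^ 2), ∃ α ∈ H,
      g = fAtPoint F n r ℓ fun j => α (Fin.castLE h2 j) }

/-!
Let `C` be the algebra generated by the pairs `(A i, B i)`. If every element of `C` has equal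
traces in its two components, then no invariant separates `A` from `B`. When `C` is semisimple,
its two `n`-dimensional modules have equal characters, hence in characteristic zero they are
isomorphic, so `A` and `B` are conjugate. Otherwise a nonzero ideal of square zero yields an
idempotent `e` for which `C` is block upper triangular; conjugating by `t e + (1 - e)` and letting
`t → 0` replaces `A` and `B` by their block diagonal parts without changing traces or invariants,
while the dimension of `C` drops.

The hitting property turns agreement on `T_H` into `f_ℓ(A, x) = f_ℓ(B, x)` for `1 ≤ ℓ ≤ n²`. The
coefficients of `f_ℓ(A, x)` are the traces of the words of length `ℓ` in `A`, and words of length at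
most `n²` suffice to control all of `C`. Indeed let `S` be the span of `1` and the `(A i, B i)`.
Since the ambient algebra has dimension `2n²`, some power of `S` with exponent less than `n²` is
followed by a dimension jump of at most one. From there on the powers of a single `y ∈ S` fill each
new layer, and `y ^ (n² + 1)` lies in the span of lower powers of `y` because the minimal polynomial
of a pair of matrices has degree at most `2n ≤ n² + 1`.
-/

section PowerStabilization

theorem pow_le_pow_of_pow_succ_le {M : Type*} [Monoid M] [Preorder M] [MulLeftMono M]
    [MulRightMono M] {a : M} (ha : 1 ≤ a) {k : ℕ} (h : a ^ (k + 1) ≤ a ^ k) (j : ℕ) :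
    a ^ j ≤ a ^ k := by
  rcases le_total j k with hjk | hkj
  · exact pow_le_pow_right' ha hjk
  · induction j, hkj using Nat.le_induction with
    | base => exact le_rfl
    | succ j _ ih =>
      calc a ^ (j + 1) = a ^ j * a := pow_succ a j
        _ ≤ a ^ k * a := mul_le_mul_left ih a
        _ = a ^ (k + 1) := (pow_succ a k).symm
        _ ≤ a ^ k := h

theorem le_sup_span_singleton_of_wcovBy {K V : Type*} [Ring K] [AddCommGroup V] [Module K V]
    {s t : Submodule K V} (hst : s ⩿ t) {w : V} (hwt : w ∈ t) (hws : w ∉ s) :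
    t ≤ s ⊔ Submodule.span K {w} := by
  have hle : s ⊔ Submodule.span K {w} ≤ t :=
    sup_le hst.le ((Submodule.span_singleton_le_iff_mem w t).2 hwt)
  refine ((hst.eq_or_eq le_sup_left hle).resolve_left fun h => hws ?_).ge
  exact h ▸ Submodule.mem_sup_right (Submodule.mem_span_singleton_self w)

theorem wcovBy_of_finrank_le_add_one {K V : Type*} [DivisionRing K] [AddCommGroup V] [Module K V]
    [FiniteDimensional K V] {s t : Submodule K V} (hst : s ≤ t)
    (h : Module.finrank K t ≤ Module.finrank K s + 1) : s ⩿ t := by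
  refine ⟨hst, fun u hsu hut => ?_⟩
  have hs := Submodule.finrank_lt_finrank_of_lt hsu
  have ht := Submodule.finrank_lt_finrank_of_lt hut
  omega

variable {F E : Type*} [Field F] [Ring E] [Algebra F E] {S : Submodule F E} {y : E} {k N : ℕ}

theorem mem_pow_of_mul_mem_pow_succ_of_wcovBy (hcov : S ^ k ⩿ S ^ (k + 1)) (hy : y ∈ S) {u : E}
    (hu : u ∈ S ^ (k + 1)) (hyu : y * u ∉ S ^ (k + 1)) {w : E} (hw : w ∈ S ^ (k + 1))
    (hyw : y * w ∈ S ^ (k + 1)) : w ∈ S ^ k := by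
  by_contra hwk
  obtain ⟨a, ha, b, hb, rfl⟩ :=
    Submodule.mem_sup.1 (le_sup_span_singleton_of_wcovBy hcov hw hwk hu)
  obtain ⟨c, rfl⟩ := Submodule.mem_span_singleton.1 hb
  refine hyu ?_
  rw [mul_add, mul_smul_comm, pow_succ']
  exact add_mem (Submodule.mul_mem_mul hy ha) (Submodule.smul_mem _ c (pow_succ' S k ▸ hyw))

theorem pow_succ_notMem_of_wcovBy (hcov : S ^ k ⩿ S ^ (k + 1)) (hy : y ∈ S) {u : E}
    (hu : u ∈ S ^ (k + 1)) (hyu : y * u ∉ S ^ (k + 1)) : y ^ (k + 1) ∉ S ^ k := by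
  intro hyk
  -- The factors of `u` are restored one at a time on the right, each replacing a power of `y`.
  have pow_mul_mem : ∀ i j, i + j = k + 1 → ∀ v ∈ S ^ i, y ^ (j + 1) * v ∈ S ^ (k + 1) := by
    intro i
    induction i with
    | zero =>
      rintro j hj v hv
      obtain rfl : j = k + 1 := by omega
      rw [pow_zero] at hv
      obtain ⟨c, rfl⟩ := Submodule.mem_one.1 hv
      rw [← Algebra.commutes, ← Algebra.smul_def, pow_succ' y, pow_succ' S]
      exact Submodule.smul_mem _ c (Submodule.mul_mem_mul hy hyk)
    | succ i ih =>
      intro j hj v hv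
      rw [pow_succ] at hv
      induction hv using Submodule.mul_induction_on' with
      | mem_mul_mem a ha s hs =>
        have hmem : y ^ (j + 1) * a ∈ S ^ (k + 1) := by
          rw [show k + 1 = (j + 1) + i by omega, pow_add S]
          exact Submodule.mul_mem_mul (Submodule.pow_mem_pow S hy _) ha
        have hmem' : y * (y ^ (j + 1) * a) ∈ S ^ (k + 1) := by
          rw [← mul_assoc, ← pow_succ']
          exact ih (j + 1) (by omega) a ha
        rw [← mul_assoc, pow_succ S]
        exact Submodule.mul_mem_mul
          (mem_pow_of_mul_mem_pow_succ_of_wcovBy hcov hy hu hyu hmem hmem') hs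
      | add a _ b _ ha hb => rw [mul_add]; exact add_mem ha hb
  exact hyu (by simpa using pow_mul_mem (k + 1) 0 rfl u hu)

theorem pow_succ_le_sup_span_pow_succ (hy : y ∈ S)
    (h : S ^ (k + 1) ≤ S ^ k ⊔ Submodule.span F {y ^ (k + 1)}) {j : ℕ} (hkj : k ≤ j) :
    S ^ (j + 1) ≤ S ^ j ⊔ Submodule.span F {y ^ (j + 1)} := by
  have hyS : Submodule.span F {y} ≤ S := (Submodule.span_singleton_le_iff_mem y S).2 hy
  have hspan (i : ℕ) : Submodule.span F {y ^ i} = Submodule.span F {y} ^ i := by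
    rw [Submodule.span_pow, Set.singleton_pow]
  rw [hspan] at h ⊢
  generalize Submodule.span F {y} = Y at *
  induction j, hkj using Nat.le_induction with
  | base => exact h
  | succ j _ ih =>
    calc S ^ (j + 1 + 1) = S * S ^ (j + 1) := pow_succ' S (j + 1)
      _ ≤ S * (S ^ j ⊔ Y ^ (j + 1)) := mul_le_mul_right ih S
      _ = S ^ (j + 1) ⊔ S * Y ^ j * Y := by
        rw [Submodule.mul_sup, ← pow_succ', pow_succ Y, mul_assoc]
      _ ≤ S ^ (j + 1) ⊔ S ^ (j + 1) * Y := by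
        rw [pow_succ' S]
        gcongr
      _ ≤ S ^ (j + 1) ⊔ (S ^ j ⊔ Y ^ (j + 1)) * Y := by gcongr
      _ = S ^ (j + 1) ⊔ S ^ j * Y ⊔ Y ^ (j + 1 + 1) := by
        rw [Submodule.sup_mul, ← pow_succ, sup_assoc]
      _ ≤ S ^ (j + 1) ⊔ Y ^ (j + 1 + 1) := by
        gcongr
        exact sup_le le_rfl (pow_succ S j ▸ mul_le_mul_right hyS _)

theorem pow_succ_mem_pow_of_natDegree_minpoly_le (hS : 1 ≤ S) (hy : y ∈ S) (hint : IsIntegral F y)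
    (hdeg : (minpoly F y).natDegree ≤ N + 1) : y ^ (N + 1) ∈ S ^ N := by
  nontriviality E
  have hmod : y ^ (N + 1) = Polynomial.aeval y (Polynomial.X ^ (N + 1) %ₘ minpoly F y) := by
    rw [Polynomial.aeval_modByMonic_eq_self_of_root (minpoly.aeval F y)]
    simp
  rw [hmod, Polynomial.aeval_eq_sum_range]
  refine sum_mem fun i hi => Submodule.smul_mem _ _ ?_
  refine pow_le_pow_right' hS ?_ (Submodule.pow_mem_pow S hy i)
  have hlt := Polynomial.natDegree_modByMonic_lt (Polynomial.X ^ (N + 1)) (minpoly.monic hint)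
    (minpoly.ne_one F y)
  have := Finset.mem_range.1 hi
  omega

variable [FiniteDimensional F E]

theorem exists_pow_wcovBy_pow_succ [Nontrivial E] (hS : 1 ≤ S)
    (hN : Module.finrank F E ≤ 2 * N) : ∃ k < N, S ^ k ⩿ S ^ (k + 1) := by
  suffices h : ∃ k < N, Module.finrank F ↥(S ^ (k + 1)) ≤ Module.finrank F ↥(S ^ k) + 1 by
    obtain ⟨k, hk, hfin⟩ := h
    exact ⟨k, hk, wcovBy_of_finrank_le_add_one (pow_le_pow_right' hS k.le_succ) hfin⟩
  by_contra! hgrow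
  have lower_bound : ∀ k ≤ N, 1 + 2 * k ≤ Module.finrank F ↥(S ^ k) := by
    intro k hk
    induction k with
    | zero => rw [pow_zero, Submodule.one_eq_span, finrank_span_singleton one_ne_zero]
    | succ k ih =>
      have := hgrow k hk
      have := ih (by omega)
      omega
  have := lower_bound N le_rfl
  have := Submodule.finrank_le (S ^ N)
  omega

theorem pow_le_pow_of_finrank_le_two_mul (hS : 1 ≤ S) (hN : Module.finrank F E ≤ 2 * N)
    (hdeg : ∀ y ∈ S, (minpoly F y).natDegree ≤ N + 1) (j : ℕ) : S ^ j ≤ S ^ N := by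
  nontriviality E
  obtain ⟨k, hkN, hcov⟩ := exists_pow_wcovBy_pow_succ hS hN
  by_cases hstab : S ^ (k + 2) ≤ S ^ (k + 1)
  · exact (pow_le_pow_of_pow_succ_le hS hstab j).trans (pow_le_pow_right' hS hkN)
  obtain ⟨y, hy, u, hu, hyu⟩ : ∃ y ∈ S, ∃ u ∈ S ^ (k + 1), y * u ∉ S ^ (k + 1) := by
    simpa [pow_succ' S (k + 1), Submodule.mul_le] using hstab
  have hspan : S ^ (k + 1) ≤ S ^ k ⊔ Submodule.span F {y ^ (k + 1)} :=
    le_sup_span_singleton_of_wcovBy hcov (Submodule.pow_mem_pow S hy _)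
      (pow_succ_notMem_of_wcovBy hcov hy hu hyu)
  have hyN : y ^ (N + 1) ∈ S ^ N :=
    pow_succ_mem_pow_of_natDegree_minpoly_le hS hy (.of_finite F y) (hdeg y hy)
  refine pow_le_pow_of_pow_succ_le hS ?_ j
  exact (pow_succ_le_sup_span_pow_succ hy hspan hkN.le).trans
    (sup_le le_rfl ((Submodule.span_singleton_le_iff_mem _ _).2 hyN))

end PowerStabilization

section Words

theorem span_insert_one_range_pow_le {R A ι : Type*} [CommSemiring R] [Semiring A] [Algebra R A]
    (c : ι → A) (N : ℕ) :
    Submodule.span R (insert 1 (Set.range c)) ^ N ≤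
      Submodule.span R {u | ∃ w : List ι, w.length ≤ N ∧ (w.map c).prod = u} := by
  induction N with
  | zero =>
    rw [pow_zero, Submodule.one_eq_span]
    exact Submodule.span_mono (Set.singleton_subset_iff.2 ⟨[], by simp⟩)
  | succ N ih =>
    rw [pow_succ']
    refine (mul_le_mul_right ih _).trans ?_
    rw [Submodule.span_mul_span]
    refine Submodule.span_mono ?_
    rintro _ ⟨_, rfl | ⟨i, rfl⟩, _, ⟨w, hw, rfl⟩, rfl⟩
    · exact ⟨w, by omega, (one_mul _).symm⟩
    · exact ⟨i :: w, by simpa using hw, by simp⟩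

theorem toSubmodule_adjoin_range_le_span_words {F E ι : Type*} [Field F] [Ring E] [Algebra F E]
    [FiniteDimensional F E] (c : ι → E) {N : ℕ} (hN : Module.finrank F E ≤ 2 * N)
    (hdeg : ∀ y : E, (minpoly F y).natDegree ≤ N + 1) :
    Subalgebra.toSubmodule (Algebra.adjoin F (Set.range c)) ≤
      Submodule.span F {u | ∃ w : List ι, w.length ≤ N ∧ (w.map c).prod = u} := by
  set S := Submodule.span F (insert 1 (Set.range c))
  have hS : 1 ≤ S := Submodule.one_le.2 (Submodule.subset_span (Set.mem_insert _ _))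
  refine le_trans ?_ (span_insert_one_range_pow_le c N)
  rw [Algebra.adjoin_eq_span, Submodule.span_le]
  intro x hx
  obtain ⟨l, hl, rfl⟩ := Submonoid.exists_list_of_mem_closure hx
  refine pow_le_pow_of_finrank_le_two_mul hS hN (fun y _ => hdeg y) l.length ?_
  clear hx
  induction l with
  | nil => exact Submodule.one_le.1 le_rfl
  | cons a l ih =>
    rw [List.forall_mem_cons] at hl
    rw [List.prod_cons, List.length_cons, pow_succ']
    exact Submodule.mul_mem_mul (Submodule.subset_span (Set.mem_insert_of_mem _ hl.1)) (ih hl.2)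

theorem natDegree_minpoly_prod_le {F ι κ : Type*} [Field F] [Fintype ι] [DecidableEq ι]
    [Fintype κ] [DecidableEq κ] (y : Matrix ι ι F × Matrix κ κ F) :
    (minpoly F y).natDegree ≤ Fintype.card ι + Fintype.card κ := by
  have hroot : Polynomial.aeval y (y.1.charpoly * y.2.charpoly) = 0 := by
    ext1
    · rw [← AlgHom.fst_apply (R := F), ← Polynomial.aeval_algHom_apply]
      simp [Matrix.aeval_self_charpoly]
    · rw [← AlgHom.snd_apply (R := F), ← Polynomial.aeval_algHom_apply]
      simp [Matrix.aeval_self_charpoly]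
  have hmonic := (Matrix.charpoly_monic y.1).mul (Matrix.charpoly_monic y.2)
  calc (minpoly F y).natDegree ≤ (y.1.charpoly * y.2.charpoly).natDegree :=
        Polynomial.natDegree_le_of_dvd (minpoly.dvd F y hroot) hmonic.ne_zero
    _ = Fintype.card ι + Fintype.card κ := by
        rw [(Matrix.charpoly_monic y.1).natDegree_mul (Matrix.charpoly_monic y.2),
          Matrix.charpoly_natDegree_eq_dim, Matrix.charpoly_natDegree_eq_dim]

theorem trace_fst_eq_trace_snd_of_words {F ι m : Type*} [Field F] [Fintype m] [DecidableEq m]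
    (A B : ι → Matrix m m F)
    (hwords : ∀ w : List ι, w.length ≤ Fintype.card m ^ 2 →
      (w.map A).prod.trace = (w.map B).prod.trace) :
    ∀ x ∈ Algebra.adjoin F (Set.range fun i => (A i, B i)), x.1.trace = x.2.trace := by
  intro x hx
  have hfin : Module.finrank F (Matrix m m F × Matrix m m F) ≤ 2 * Fintype.card m ^ 2 := by
    rw [Module.finrank_prod, Module.finrank_matrix, Module.finrank_self]
    exact le_of_eq (by ring)
  have hdeg (y : Matrix m m F × Matrix m m F) :
      (minpoly F y).natDegree ≤ Fintype.card m ^ 2 + 1 := by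
    refine (natDegree_minpoly_prod_le y).trans ?_
    zify
    nlinarith [sq_nonneg ((Fintype.card m : ℤ) - 1)]
  let τ : Matrix m m F × Matrix m m F →ₗ[F] F :=
    Matrix.traceLinearMap m F F ∘ₗ LinearMap.fst F _ _ -
      Matrix.traceLinearMap m F F ∘ₗ LinearMap.snd F _ _
  suffices hτ : Subalgebra.toSubmodule (Algebra.adjoin F (Set.range fun i => (A i, B i))) ≤
      LinearMap.ker τ from sub_eq_zero.1 (hτ hx)
  refine (toSubmodule_adjoin_range_le_span_words _ hfin hdeg).trans (Submodule.span_le.2 ?_)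
  rintro _ ⟨w, hw, rfl⟩
  have hfst : (w.map fun i => (A i, B i)).prod.1 = (w.map A).prod := by
    simpa [Function.comp_def] using
      map_list_prod (RingHom.fst (Matrix m m F) (Matrix m m F)) (w.map fun i => (A i, B i))
  have hsnd : (w.map fun i => (A i, B i)).prod.2 = (w.map B).prod := by
    simpa [Function.comp_def] using
      map_list_prod (RingHom.snd (Matrix m m F) (Matrix m m F)) (w.map fun i => (A i, B i))
  simpa [τ, hfst, hsnd, sub_eq_zero] using hwords w hw

end Words

section Characters

section

variable {C S W : Type*} [Ring C] [AddCommGroup S] [Module C S] [AddCommGroup W] [Module C W]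
  {e : C}

theorem exists_isIdempotentElem_linearEquiv_span [IsSemisimpleRing C] [IsSimpleModule C S] :
    ∃ e : C, IsIdempotentElem e ∧ Nonempty (S ≃ₗ[C] Ideal.span {e}) := by
  obtain ⟨I, ⟨φ⟩⟩ := IsSemisimpleRing.exists_linearEquiv_ideal_of_isSimpleModule C S
  obtain ⟨e, he, rfl⟩ := IsSemisimpleRing.ideal_eq_span_idempotent I
  exact ⟨e, he, ⟨φ⟩⟩

theorem exists_smul_ne_zero_of_linearEquiv_span [Nontrivial S] (he : IsIdempotentElem e)
    (φ : S ≃ₗ[C] Ideal.span {e}) : ∃ s : S, e • s ≠ 0 := by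
  have heI : e ∈ Ideal.span {e} := Ideal.mem_span_singleton_self e
  have he0 : e ≠ 0 := by
    rintro rfl
    have := φ.symm.toEquiv.nontrivial
    rw [Ideal.span_singleton_zero] at this
    exact not_subsingleton (⊥ : Ideal C) inferInstance
  refine ⟨φ.symm ⟨e, heI⟩, fun h => he0 ?_⟩
  rw [← map_smul, LinearEquiv.map_eq_zero_iff] at h
  exact he.eq.symm.trans (congrArg Subtype.val h)

theorem exists_injective_of_linearEquiv_span [IsSimpleModule C S] (φ : S ≃ₗ[C] Ideal.span {e})
    {w : W} (hw : e • w ≠ 0) : ∃ g : S →ₗ[C] W, Function.Injective g := by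
  refine ⟨LinearMap.toSpanSingleton C W w ∘ₗ Submodule.subtype _ ∘ₗ φ.toLinearMap,
    LinearMap.injective_of_ne_zero fun h => hw ?_⟩
  simpa using LinearMap.congr_fun h (φ.symm ⟨e, Ideal.mem_span_singleton_self e⟩)

end

section

variable {F C V V₁ V₂ W : Type*} [Field F] [Ring C] [Algebra F C]
  [AddCommGroup V] [Module F V] [Module C V] [IsScalarTower F C V]
  [AddCommGroup V₁] [Module F V₁] [Module C V₁] [IsScalarTower F C V₁] [FiniteDimensional F V₁]
  [AddCommGroup V₂] [Module F V₂] [Module C V₂] [IsScalarTower F C V₂] [FiniteDimensional F V₂]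
  [AddCommGroup W] [Module F W] [Module C W] [IsScalarTower F C W]

theorem trace_lsmul_of_linearEquiv_prod (φ : V ≃ₗ[C] V₁ × V₂) (c : C) :
    LinearMap.trace F V (Algebra.lsmul F F V c) =
      LinearMap.trace F V₁ (Algebra.lsmul F F V₁ c) +
        LinearMap.trace F V₂ (Algebra.lsmul F F V₂ c) := by
  rw [← LinearMap.trace_prodMap', ← LinearMap.trace_conj' _ (φ.restrictScalars F)]
  congr 1
  ext v <;> simp [LinearEquiv.conj_apply]

variable [CharZero F] [FiniteDimensional F V]

theorem exists_smul_ne_zero_of_trace_lsmul_eq {e : C} (he : IsIdempotentElem e)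
    (htr : LinearMap.trace F V (Algebra.lsmul F F V e) =
      LinearMap.trace F W (Algebra.lsmul F F W e))
    (hV : ∃ v : V, e • v ≠ 0) : ∃ w : W, e • w ≠ 0 := by
  contrapose! hV
  have hW : Algebra.lsmul F F W e = 0 := LinearMap.ext hV
  rw [hW, map_zero] at htr
  exact LinearMap.congr_fun
    (LinearMap.IsIdempotentElem.eq_zero_of_trace_eq_zero (he.map (Algebra.lsmul F F V)) htr)

theorem exists_injective_of_trace_lsmul_eq [IsSemisimpleRing C] (S : Submodule C V)
    [IsSimpleModule C S]
    (htr : ∀ c : C, LinearMap.trace F V (Algebra.lsmul F F V c) =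
      LinearMap.trace F W (Algebra.lsmul F F W c)) :
    ∃ g : S →ₗ[C] W, Function.Injective g := by
  have := IsSimpleModule.nontrivial C S
  obtain ⟨e, he, ⟨φ⟩⟩ := exists_isIdempotentElem_linearEquiv_span (C := C) (S := S)
  obtain ⟨s, hs⟩ := exists_smul_ne_zero_of_linearEquiv_span he φ
  obtain ⟨w, hw⟩ := exists_smul_ne_zero_of_trace_lsmul_eq he (htr e)
    ⟨(s : V), fun h => hs (Subtype.ext h)⟩
  exact exists_injective_of_linearEquiv_span φ hw

variable [FiniteDimensional F W]

theorem finrank_eq_of_trace_lsmul_eq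
    (htr : ∀ c : C, LinearMap.trace F V (Algebra.lsmul F F V c) =
      LinearMap.trace F W (Algebra.lsmul F F W c)) :
    Module.finrank F V = Module.finrank F W := by
  simpa [LinearMap.trace_one] using htr 1

end

universe u v

variable {F C : Type*} [Field F] [CharZero F] [Ring C] [Algebra F C] [IsSemisimpleRing C]
  {V : Type u} {W : Type v} [AddCommGroup V] [Module F V] [FiniteDimensional F V]
  [AddCommGroup W] [Module F W] [FiniteDimensional F W]

theorem nonempty_linearEquiv_of_trace_lsmul_eq [Module C V] [IsScalarTower F C V]
    [Module C W] [IsScalarTower F C W]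
    (htr : ∀ c : C, LinearMap.trace F V (Algebra.lsmul F F V c) =
      LinearMap.trace F W (Algebra.lsmul F F W c)) : Nonempty (V ≃ₗ[C] W) := by
  induction hd : Module.finrank F V using Nat.strong_induction_on generalizing V W with
  | _ d ih =>
  have hdim := finrank_eq_of_trace_lsmul_eq htr
  rcases subsingleton_or_nontrivial V with hV | hV
  · rw [Module.finrank_zero_of_subsingleton] at hdim
    have := Module.finrank_zero_iff.1 hdim.symm
    exact ⟨LinearEquiv.ofSubsingleton V W⟩
  obtain ⟨S, hS⟩ := IsSemisimpleModule.exists_simple_submodule C V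
  obtain ⟨g, hg⟩ := exists_injective_of_trace_lsmul_eq S htr
  obtain ⟨V', hV'⟩ := exists_isCompl S
  obtain ⟨W', hW'⟩ := exists_isCompl (LinearMap.range g)
  have : FiniteDimensional F S := .of_injective (S.subtype.restrictScalars F) S.subtype_injective
  have : FiniteDimensional F V' :=
    .of_injective (V'.subtype.restrictScalars F) V'.subtype_injective
  have : FiniteDimensional F W' :=
    .of_injective (W'.subtype.restrictScalars F) W'.subtype_injective
  let eV : V ≃ₗ[C] S × V' := (Submodule.prodEquivOfIsCompl _ _ hV').symm
  let eW : W ≃ₗ[C] S × W' := (Submodule.prodEquivOfIsCompl _ _ hW').symm.trans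
    (LinearEquiv.prodCongr (LinearEquiv.ofInjective g hg).symm (LinearEquiv.refl C W'))
  have hlt : Module.finrank F V' < d := by
    have := IsSimpleModule.nontrivial C S
    have hpos : 0 < Module.finrank F S := Module.finrank_pos
    have hsum := (eV.restrictScalars F).finrank_eq
    rw [Module.finrank_prod, hd] at hsum
    omega
  have htr' (c : C) : LinearMap.trace F V' (Algebra.lsmul F F V' c) =
      LinearMap.trace F W' (Algebra.lsmul F F W' c) := by
    have h := htr c
    rw [trace_lsmul_of_linearEquiv_prod eV, trace_lsmul_of_linearEquiv_prod eW] at h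
    exact add_left_cancel h
  obtain ⟨ψ⟩ := ih _ hlt htr' rfl
  exact ⟨eV.trans (((LinearEquiv.refl C S).prodCongr ψ).trans eW.symm)⟩

theorem exists_linearEquiv_intertwining_of_trace_eq (ρ : C →ₐ[F] Module.End F V)
    (σ : C →ₐ[F] Module.End F W)
    (htr : ∀ c, LinearMap.trace F V (ρ c) = LinearMap.trace F W (σ c)) :
    ∃ φ : V ≃ₗ[F] W, ∀ c v, φ (ρ c v) = σ c (φ v) := by
  let : Module C V := Module.compHom V ρ.toRingHom
  let : Module C W := Module.compHom W σ.toRingHom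
  have hV (c : C) (v : V) : c • v = ρ c v := rfl
  have hW (c : C) (w : W) : c • w = σ c w := rfl
  have : IsScalarTower F C V := ⟨fun a c v => by simp [hV]⟩
  have : IsScalarTower F C W := ⟨fun a c w => by simp [hW]⟩
  obtain ⟨φ⟩ := nonempty_linearEquiv_of_trace_lsmul_eq (F := F) (V := V) (W := W) htr
  exact ⟨φ.restrictScalars F, fun c v => φ.map_smul c v⟩

end Characters

section Peirce

section

variable {F E : Type*} [CommRing F] [Ring E] [Algebra F E] {e x y : E}

/-- The block diagonal part `e x e + (1 - e) x (1 - e)` of `x` in the Peirce decomposition of the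
algebra `E` with respect to an idempotent `e`. -/
def peirceDiag (F : Type*) {E : Type*} [CommRing F] [Ring E] [Algebra F E] (e : E) : E →ₗ[F] E :=
  LinearMap.mulLeftRight F (e, e) + LinearMap.mulLeftRight F (1 - e, 1 - e)

theorem peirceDiag_apply : peirceDiag F e x = e * x * e + (1 - e) * x * (1 - e) := by
  simp [peirceDiag]

theorem peirceDiag_prod {E' : Type*} [Ring E'] [Algebra F E'] (e x : E) (e' x' : E') :
    peirceDiag F (e, e') (x, x') = (peirceDiag F e x, peirceDiag F e' x') := by
  simp only [peirceDiag_apply]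
  rfl

/-- The elements that are block upper triangular for the Peirce decomposition with respect to `e`:
those whose component `(1 - e) x e` vanishes. -/
def peirceTriangular (F : Type*) {E : Type*} [CommRing F] [Ring E] [Algebra F E] {e : E}
    (he : IsIdempotentElem e) : Subalgebra F E where
  carrier := {x | e * x * e = x * e}
  mul_mem' {x y} hx hy := by
    calc e * (x * y) * e = e * x * (y * e) := by noncomm_ring
      _ = e * x * (e * y * e) := by rw [hy]
      _ = e * x * e * y * e := by noncomm_ring
      _ = x * (e * y * e) := by rw [hx]; noncomm_ring
      _ = x * y * e := by rw [hy, mul_assoc]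
  add_mem' {x y} hx hy := by
    calc e * (x + y) * e = e * x * e + e * y * e := by noncomm_ring
      _ = (x + y) * e := by rw [hx, hy, add_mul]
  algebraMap_mem' c := by
    change e * algebraMap F E c * e = algebraMap F E c * e
    rw [← Algebra.commutes, mul_assoc, he.eq]

theorem mem_peirceTriangular {he : IsIdempotentElem e} :
    x ∈ peirceTriangular F he ↔ e * x * e = x * e := Iff.rfl

theorem one_sub_mul_mul_of_mem_peirceTriangular {he : IsIdempotentElem e}
    (hx : x ∈ peirceTriangular F he) : (1 - e) * x * e = 0 := by
  rw [sub_mul, sub_mul, mem_peirceTriangular.1 hx, one_mul, sub_self]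

theorem peirceDiag_of_mem_peirceTriangular {he : IsIdempotentElem e}
    (hx : x ∈ peirceTriangular F he) : peirceDiag F e x = x * e + (1 - e) * x := by
  rw [peirceDiag_apply, mem_peirceTriangular.1 hx, mul_sub,
    one_sub_mul_mul_of_mem_peirceTriangular hx, mul_one, sub_zero]

theorem peirceDiag_mul {he : IsIdempotentElem e} (hx : x ∈ peirceTriangular F he)
    (hy : y ∈ peirceTriangular F he) :
    peirceDiag F e (x * y) = peirceDiag F e x * peirceDiag F e y := by
  rw [peirceDiag_of_mem_peirceTriangular hx, peirceDiag_of_mem_peirceTriangular hy,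
    peirceDiag_of_mem_peirceTriangular (mul_mem hx hy)]
  calc x * y * e + (1 - e) * (x * y)
      = x * (e * y * e) + x * (e * (1 - e)) * y + (1 - e) * (x * y) * e +
          ((1 - e) * x * y - (1 - e) * x * e * y) := by
        rw [mem_peirceTriangular.1 hy, he.mul_one_sub_self,
          one_sub_mul_mul_of_mem_peirceTriangular hx,
          one_sub_mul_mul_of_mem_peirceTriangular (mul_mem hx hy)]
        noncomm_ring
    _ = (x * e + (1 - e) * x) * (y * e + (1 - e) * y) := by noncomm_ring

theorem peirceDiag_one (he : IsIdempotentElem e) : peirceDiag F e 1 = 1 := by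
  rw [peirceDiag_of_mem_peirceTriangular (one_mem (peirceTriangular F he)), one_mul, mul_one,
    add_sub_cancel]

theorem smul_add_one_sub_mul (he : IsIdempotentElem e) (s t : F) :
    (s • e + (1 - e)) * (t • e + (1 - e)) = (s * t) • e + (1 - e) := by
  simp only [add_mul, mul_add, smul_mul_assoc, mul_smul_comm, smul_smul, he.eq, he.mul_one_sub_self,
    he.one_sub_mul_self, he.one_sub.eq, smul_zero, add_zero, zero_add, mul_comm t]

/-- The invertible element `t e + (1 - e)`; conjugating by it and letting `t` tend to `0`
degenerates block upper triangular elements to their block diagonal parts. -/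
def peirceUnit (he : IsIdempotentElem e) (t : Fˣ) : Eˣ where
  val := (t : F) • e + (1 - e)
  inv := (↑t⁻¹ : F) • e + (1 - e)
  val_inv := by rw [smul_add_one_sub_mul he, t.mul_inv, one_smul, add_sub_cancel]
  inv_val := by rw [smul_add_one_sub_mul he, t.inv_mul, one_smul, add_sub_cancel]

theorem peirceUnit_conj {he : IsIdempotentElem e} (hx : x ∈ peirceTriangular F he) (t : Fˣ) :
    peirceUnit he t * x * ↑(peirceUnit he t)⁻¹ =
      peirceDiag F e x + (t : F) • (e * x * (1 - e)) := by
  calc ((t : F) • e + (1 - e)) * x * ((↑t⁻¹ : F) • e + (1 - e))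
      = ((t : F) * ↑t⁻¹) • (e * x * e) + (1 - e) * x * (1 - e) + (t : F) • (e * x * (1 - e)) +
          (↑t⁻¹ : F) • ((1 - e) * x * e) := by
        simp only [add_mul _ _ x, add_mul _ _ (_ + _), mul_add _ (_ • e), smul_mul_assoc,
          mul_smul_comm, smul_smul, mul_comm (↑t⁻¹ : F)]
        abel
    _ = peirceDiag F e x + (t : F) • (e * x * (1 - e)) := by
        rw [one_sub_mul_mul_of_mem_peirceTriangular hx, smul_zero, add_zero, t.mul_inv, one_smul,
          peirceDiag_apply]

theorem adjoin_range_peirceDiag_le {ι : Type*} {c : ι → E} {he : IsIdempotentElem e}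
    (hc : Algebra.adjoin F (Set.range c) ≤ peirceTriangular F he) :
    Subalgebra.toSubmodule (Algebra.adjoin F (Set.range fun i => peirceDiag F e (c i))) ≤
      (Subalgebra.toSubmodule (Algebra.adjoin F (Set.range c))).map (peirceDiag F e) := by
  let φ : Algebra.adjoin F (Set.range c) →ₐ[F] E :=
    AlgHom.ofLinearMap (peirceDiag F e ∘ₗ (Algebra.adjoin F (Set.range c)).val.toLinearMap)
      (peirceDiag_one he) fun x y => peirceDiag_mul (hc x.2) (hc y.2)
  have hφ : Algebra.adjoin F (Set.range fun i => peirceDiag F e (c i)) ≤ φ.range :=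
    Algebra.adjoin_le (Set.range_subset_iff.2 fun i =>
      ⟨⟨c i, Algebra.subset_adjoin (Set.mem_range_self i)⟩, rfl⟩)
  intro x hx
  obtain ⟨y, rfl⟩ := hφ hx
  exact ⟨y, y.2, rfl⟩

end

theorem finrank_adjoin_range_peirceDiag_lt {F E ι : Type*} [Field F] [Ring E] [Algebra F E]
    [FiniteDimensional F E] {e x : E} {c : ι → E} {he : IsIdempotentElem e}
    (hc : Algebra.adjoin F (Set.range c) ≤ peirceTriangular F he)
    (hx : x ∈ Algebra.adjoin F (Set.range c)) (hx0 : x ≠ 0) (hxe : peirceDiag F e x = 0) :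
    Module.finrank F (Algebra.adjoin F (Set.range fun i => peirceDiag F e (c i))) <
      Module.finrank F (Algebra.adjoin F (Set.range c)) := by
  let C := Subalgebra.toSubmodule (Algebra.adjoin F (Set.range c))
  let φ : C →ₗ[F] E := (peirceDiag F e).domRestrict C
  have hker : 0 < Module.finrank F (LinearMap.ker φ) :=
    Submodule.one_le_finrank_iff.2 <| (Submodule.ne_bot_iff _).2
      ⟨⟨x, hx⟩, hxe, fun h => hx0 (congrArg Subtype.val h)⟩
  have hle : Subalgebra.toSubmodule
      (Algebra.adjoin F (Set.range fun i => peirceDiag F e (c i))) ≤ LinearMap.range φ :=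
    (adjoin_range_peirceDiag_le hc).trans (LinearMap.range_domRestrict C _).ge
  calc Module.finrank F (Algebra.adjoin F (Set.range fun i => peirceDiag F e (c i)))
      ≤ Module.finrank F (LinearMap.range φ) := Submodule.finrank_mono hle
    _ < Module.finrank F (LinearMap.range φ) + Module.finrank F (LinearMap.ker φ) :=
      Nat.lt_add_of_pos_right hker
    _ = Module.finrank F (Algebra.adjoin F (Set.range c)) := φ.finrank_range_add_finrank_ker

theorem trace_peirceDiag {F m : Type*} [CommRing F] [Fintype m] [DecidableEq m] {p : Matrix m m F}
    (hp : IsIdempotentElem p) (X : Matrix m m F) : (peirceDiag F p X).trace = X.trace := by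
  rw [peirceDiag_apply, Matrix.trace_add, Matrix.trace_mul_comm, ← mul_assoc, hp.eq,
    Matrix.trace_mul_comm ((1 - p) * X), ← mul_assoc, hp.one_sub.eq, ← Matrix.trace_add,
    ← add_mul, add_sub_cancel, one_mul]

end Peirce

section Degeneration

theorem exists_ne_bot_mul_eq_zero_of_not_isSemisimpleRing {C : Type*} [Ring C] [IsArtinianRing C]
    (hC : ¬ IsSemisimpleRing C) : ∃ K : Ideal C, K ≠ ⊥ ∧ ∀ x ∈ K, ∀ y ∈ K, x * y = 0 := by
  classical
  have hJ : Ring.jacobson C ≠ ⊥ := mt IsArtinianRing.isSemisimpleRing_iff_jacobson.2 hC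
  have hnil : IsNilpotent (Ring.jacobson C) := IsSemiprimaryRing.isNilpotent
  obtain ⟨k, hk, hmin⟩ : ∃ k, Ring.jacobson C ^ k = 0 ∧ ∀ j < k, Ring.jacobson C ^ j ≠ 0 :=
    ⟨Nat.find hnil, Nat.find_spec hnil, fun _ => Nat.find_min hnil⟩
  have hk2 : 2 ≤ k := by
    by_contra! hlt
    have hle := Ideal.pow_le_pow_right (I := Ring.jacobson C) (show k ≤ 1 by omega)
    rw [hk, Submodule.pow_one] at hle
    exact hJ (le_bot_iff.1 hle)
  refine ⟨Ring.jacobson C ^ (k - 1), hmin _ (by omega), fun x hx y hy => ?_⟩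
  have hxy := Ideal.mul_mem_mul hx hy
  rw [← Submodule.pow_add _ (by omega)] at hxy
  have hxyk := Ideal.pow_le_pow_right (show k ≤ k - 1 + (k - 1) by omega) hxy
  rw [hk] at hxyk
  exact (Submodule.mem_bot _).1 hxyk

variable {F C : Type*} [Field F] [Ring C] [Algebra F C]

theorem exists_peirce_of_mul_eq_zero {V : Type*} [AddCommGroup V] [Module F V]
    (ρ : C →ₐ[F] Module.End F V) {K : Ideal C} (hK : ∀ x ∈ K, ∀ y ∈ K, x * y = 0) :
    ∃ (p : Module.End F V) (hp : IsIdempotentElem p),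
      (∀ c, ρ c ∈ peirceTriangular F hp) ∧ ∀ k ∈ K, peirceDiag F p (ρ k) = 0 := by
  let U : Submodule F V := ⨆ k : K, LinearMap.range (ρ k)
  have range_le (k : K) : LinearMap.range (ρ k) ≤ U :=
    le_iSup (fun k : K => LinearMap.range (ρ k)) k
  have map_mem (c : C) : U ≤ U.comap (ρ c) := by
    refine iSup_le fun k => ?_
    rintro _ ⟨v, rfl⟩
    refine range_le ⟨c * k, K.mul_mem_left c k.2⟩ ⟨v, ?_⟩
    simp
  have map_eq_zero (k : K) : U ≤ LinearMap.ker (ρ k) := by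
    refine iSup_le fun k' => ?_
    rintro _ ⟨v, rfl⟩
    rw [LinearMap.mem_ker, ← Module.End.mul_apply, ← map_mul, hK k k.2 k' k'.2, map_zero,
      LinearMap.zero_apply]
  obtain ⟨Q, hQ⟩ := Submodule.exists_isCompl U
  let p : Module.End F V := U.projection Q hQ
  have hp : IsIdempotentElem p := Submodule.isIdempotentElem_projection hQ
  have p_mem (v : V) : p v ∈ U := Submodule.projection_apply_mem hQ v
  have p_eq {u : V} (hu : u ∈ U) : p u = u := Submodule.projection_apply_of_mem_left hQ hu
  have htri (c : C) : ρ c ∈ peirceTriangular F hp :=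
    LinearMap.ext fun v => p_eq (map_mem c (p_mem v))
  refine ⟨p, hp, htri, fun k hk => ?_⟩
  have hkp : ρ k * p = 0 := LinearMap.ext fun v => map_eq_zero ⟨k, hk⟩ (p_mem v)
  have hpk : p * ρ k = ρ k := LinearMap.ext fun v => p_eq (range_le ⟨k, hk⟩ ⟨v, rfl⟩)
  rw [peirceDiag_of_mem_peirceTriangular (htri k), hkp, sub_mul, hpk, one_mul, sub_self, add_zero]

theorem exists_matrix_peirce_of_mul_eq_zero {m : Type*} [Fintype m] [DecidableEq m]
    (ρ : C →ₐ[F] Matrix m m F) {K : Ideal C} (hK : ∀ x ∈ K, ∀ y ∈ K, x * y = 0) :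
    ∃ (p : Matrix m m F) (hp : IsIdempotentElem p),
      (∀ c, ρ c ∈ peirceTriangular F hp) ∧ ∀ k ∈ K, peirceDiag F p (ρ k) = 0 := by
  let φ : Matrix m m F ≃ₐ[F] Module.End F (m → F) := Matrix.toLinAlgEquiv'
  obtain ⟨p, hp, htri, hdiag⟩ := exists_peirce_of_mul_eq_zero (φ.toAlgHom.comp ρ) hK
  refine ⟨φ.symm p, hp.map φ.symm, fun c => φ.injective ?_, fun k hk => φ.injective ?_⟩
  · simpa using mem_peirceTriangular.1 (htri c)
  · simpa [peirceDiag_apply] using hdiag k hk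

theorem exists_peirce_of_not_isSemisimpleRing {m : Type*} [Fintype m] [DecidableEq m]
    {D : Subalgebra F (Matrix m m F × Matrix m m F)} (hD : ¬ IsSemisimpleRing D) :
    ∃ (e : Matrix m m F × Matrix m m F) (he : IsIdempotentElem e),
      D ≤ peirceTriangular F he ∧ ∃ x ∈ D, x ≠ 0 ∧ peirceDiag F e x = 0 := by
  have : IsArtinianRing D := .of_finite F D
  obtain ⟨K, hK, hmul⟩ := exists_ne_bot_mul_eq_zero_of_not_isSemisimpleRing hD
  obtain ⟨p, hp, hptri, hpK⟩ := exists_matrix_peirce_of_mul_eq_zero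
    ((AlgHom.fst F _ _).comp D.val) hmul
  obtain ⟨q, hq, hqtri, hqK⟩ := exists_matrix_peirce_of_mul_eq_zero
    ((AlgHom.snd F _ _).comp D.val) hmul
  obtain ⟨x, hx, hx0⟩ := Submodule.exists_mem_ne_zero_of_ne_bot hK
  refine ⟨(p, q), Prod.ext hp hq, fun y hy => Prod.ext (hptri ⟨y, hy⟩) (hqtri ⟨y, hy⟩), x, x.2,
    fun h => hx0 (Subtype.ext h), ?_⟩
  exact Prod.ext (hpK x hx) (hqK x hx)

end Degeneration

section TracePolynomials

open MvPolynomial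

section

variable {R m : Type*} [CommRing R] [Fintype m] [DecidableEq m] {r ℓ : ℕ}

/-- The value at `x` of the trace polynomial `f_ℓ(A, ·)`, with `A` and `x` over the same ring.
Both `fpoly` (the point `x` is generic) and `fAtPoint` (the tuple `A` is generic) are instances. -/
def tracePolyAt (A : Fin r → Matrix m m R) (x : Fin ℓ → R) : R :=
  (List.ofFn fun j : Fin ℓ => ∑ i : Fin r, x j ^ (i : ℕ) • A i).prod.trace

theorem map_tracePolyAt {S : Type*} [CommRing S] (φ : R →+* S) (A : Fin r → Matrix m m R)
    (x : Fin ℓ → R) :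
    φ (tracePolyAt A x) = tracePolyAt (fun i => (A i).map φ) fun j => φ (x j) := by
  rw [tracePolyAt, tracePolyAt, AddMonoidHom.map_trace, ← RingHom.mapMatrix_apply, map_list_prod,
    List.map_ofFn]
  congr 3
  ext j a b
  simp [Matrix.sum_apply]

theorem tracePolyAt_conj (P : (Matrix m m R)ˣ) (A : Fin r → Matrix m m R) (x : Fin ℓ → R) :
    tracePolyAt (fun i => P.val * A i * P⁻¹.val) x = tracePolyAt A x := by
  let φ := MulSemiringAction.toRingHom (ConjAct (Matrix m m R)ˣ) (Matrix m m R)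
    (ConjAct.toConjAct P)
  have hφ (X : Matrix m m R) : φ X = P.val * X * P⁻¹.val := rfl
  have hsum (j : Fin ℓ) :
      ∑ i : Fin r, x j ^ (i : ℕ) • (P.val * A i * P⁻¹.val) =
        φ (∑ i : Fin r, x j ^ (i : ℕ) • A i) := by
    simp [hφ, Finset.mul_sum, Finset.sum_mul]
  have hprod := map_list_prod φ (List.ofFn fun j => ∑ i : Fin r, x j ^ (i : ℕ) • A i)
  rw [List.map_ofFn] at hprod
  simp only [tracePolyAt, hsum]
  exact (congrArg Matrix.trace hprod.symm).trans (Matrix.trace_units_conj P _)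

theorem tracePolyAt_eq_sum (A : Fin r → Matrix m m R) (x : Fin ℓ → R) :
    tracePolyAt A x =
      ∑ w : Fin ℓ → Fin r, (∏ j, x j ^ (w j : ℕ)) * (List.ofFn fun j => A (w j)).prod.trace := by
  rw [tracePolyAt, ← MultilinearMap.mkPiAlgebraFin_apply (R := R), MultilinearMap.map_sum,
    Matrix.trace_sum]
  refine Finset.sum_congr rfl fun w _ => ?_
  rw [MultilinearMap.map_smul_univ, MultilinearMap.mkPiAlgebraFin_apply, Matrix.trace_smul,
    smul_eq_mul]

end

theorem fpoly_eq_tracePolyAt {R : Type*} [CommRing R] {n r : ℕ} (ℓ : ℕ)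
    (A : Fin r → Matrix (Fin n) (Fin n) R) :
    fpoly n r ℓ A = tracePolyAt (fun i => (A i).map C) X := by
  rw [fpoly, tracePolyAt]
  congr 3
  ext1 j
  refine Finset.sum_congr rfl fun i _ => ?_
  ext1 a b
  simp [mul_comm]

theorem coeff_fpoly {R : Type*} [CommRing R] {n r ℓ : ℕ} (A : Fin r → Matrix (Fin n) (Fin n) R)
    (w : Fin ℓ → Fin r) :
    coeff (Finsupp.equivFunOnFinite.symm fun j => (w j : ℕ)) (fpoly n r ℓ A) =
      (List.ofFn fun j => A (w j)).prod.trace := by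
  have hword (v : Fin ℓ → Fin r) :
      (∏ j, (X j : MvPolynomial (Fin ℓ) R) ^ (v j : ℕ)) *
          (List.ofFn fun j => (A (v j)).map C).prod.trace =
        monomial (Finsupp.equivFunOnFinite.symm fun j => (v j : ℕ))
          (List.ofFn fun j => A (v j)).prod.trace := by
    have hprod := map_list_prod (C (σ := Fin ℓ) (R := R)).mapMatrix (List.ofFn fun j => A (v j))
    rw [List.map_ofFn] at hprod
    rw [monomial_eq, Finsupp.prod_fintype _ _ (by simp), AddMonoidHom.map_trace,
      ← RingHom.mapMatrix_apply, hprod, mul_comm]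
    rfl
  have hinj (v : Fin ℓ → Fin r) (h : (fun j => (v j : ℕ)) = fun j => (w j : ℕ)) : v = w :=
    funext fun j => Fin.ext (congrFun h j)
  rw [fpoly_eq_tracePolyAt, tracePolyAt_eq_sum]
  simp only [hword]
  rw [coeff_sum, Finset.sum_eq_single w]
  · simp
  · intro v _ hv
    rw [coeff_monomial, if_neg]
    exact fun h => hv (hinj v (Finsupp.equivFunOnFinite.symm.injective h))
  · simp

theorem trace_prod_map_eq_of_fpoly_eq {R : Type*} [CommRing R] {n r : ℕ}
    {A B : Fin r → Matrix (Fin n) (Fin n) R} {w : List (Fin r)}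
    (h : fpoly n r w.length A = fpoly n r w.length B) :
    (w.map A).prod.trace = (w.map B).prod.trace := by
  have hcoeff := coeff_fpoly A w.get
  rw [h, coeff_fpoly] at hcoeff
  simpa [← Function.comp_def, ← List.map_ofFn] using hcoeff.symm

variable {F : Type*} [Field F] {n r ℓ : ℕ}

theorem fAtPoint_eq_tracePolyAt (α : Fin ℓ → F) :
    fAtPoint F n r ℓ α = tracePolyAt (genMat F n r) fun j => C (α j) := by
  rw [fAtPoint, tracePolyAt]
  congr 3
  ext1 j
  refine Finset.sum_congr rfl fun i _ => ?_
  ext1 a b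
  simp [smul_eq_C_mul]

theorem eval_fpoly (A : Fin r → Matrix (Fin n) (Fin n) F) (α : Fin ℓ → F) :
    eval α (fpoly n r ℓ A) = evalTuple A (fAtPoint F n r ℓ α) := by
  rw [fpoly_eq_tracePolyAt, fAtPoint_eq_tracePolyAt, evalTuple, map_tracePolyAt, map_tracePolyAt]
  congr 1
  · ext i a b
    simp [genMat]
  · simp

theorem isSimConjInvariant_fAtPoint (α : Fin ℓ → F) :
    IsSimConjInvariant F n r (fAtPoint F n r ℓ α) := by
  intro P
  let P' := Units.map (C (σ := Fin r × Fin n × Fin n) (R := F)).mapMatrix.toMonoidHom P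
  rw [fAtPoint_eq_tracePolyAt, ← AlgHom.coe_toRingHom, map_tracePolyAt,
    ← tracePolyAt_conj P' (genMat F n r)]
  congr 1
  · ext i a b
    simp [genMat, P']
  · simp

end TracePolynomials

section Invariants

variable {F : Type*} [Field F] {n r : ℕ} {f : MvPolynomial (Fin r × Fin n × Fin n) F}

theorem evalTuple_eq_aeval (A : Fin r → Matrix (Fin n) (Fin n) F) :
    evalTuple A f = MvPolynomial.aeval (fun v => A v.1 v.2.1 v.2.2) f := by
  rw [evalTuple, ← MvPolynomial.coe_aeval_eq_eval, RingHom.coe_coe]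

theorem evalTuple_conj (hf : IsSimConjInvariant F n r f) (P : GL (Fin n) F)
    (A : Fin r → Matrix (Fin n) (Fin n) F) :
    evalTuple (fun i => P.val * A i * P⁻¹.val) f = evalTuple A f := by
  conv_rhs => rw [← hf P]
  rw [evalTuple_eq_aeval, evalTuple_eq_aeval, MvPolynomial.comp_aeval_apply]
  congr 2
  ext v
  simp [Matrix.mul_apply, genMat]

theorem evalTuple_eq_of_mul_eq_mul (hf : IsSimConjInvariant F n r f) (P : GL (Fin n) F)
    {A B : Fin r → Matrix (Fin n) (Fin n) F} (h : ∀ i, P.val * A i = B i * P.val) :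
    evalTuple A f = evalTuple B f := by
  rw [← evalTuple_conj hf P A]
  simp only [h, Units.mul_inv_cancel_right]

theorem evalTuple_eq_of_forall_ne_zero [Infinite F] (D N : Fin r → Matrix (Fin n) (Fin n) F)
    {c : F} (h : ∀ t : F, t ≠ 0 → evalTuple (fun i => D i + t • N i) f = c) :
    evalTuple D f = c := by
  let g : Polynomial F := MvPolynomial.aeval (fun v : Fin r × Fin n × Fin n =>
    Polynomial.C (D v.1 v.2.1 v.2.2) + Polynomial.X * Polynomial.C (N v.1 v.2.1 v.2.2)) f
  have hg (t : F) : g.eval t = evalTuple (fun i => D i + t • N i) f := by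
    rw [evalTuple_eq_aeval, ← Polynomial.coe_aeval_eq_eval, MvPolynomial.comp_aeval_apply]
    congr 2
    ext v
    simp [mul_comm t]
  have hconst : g = Polynomial.C c :=
    Polynomial.eq_of_infinite_eval_eq _ _
      ((Set.finite_singleton (0 : F)).infinite_compl.mono fun t ht => by simp [hg, h t ht])
  simpa [hconst] using (hg 0).symm

theorem evalTuple_peirceDiag [Infinite F] (hf : IsSimConjInvariant F n r f)
    {A : Fin r → Matrix (Fin n) (Fin n) F} {p : Matrix (Fin n) (Fin n) F}
    {hp : IsIdempotentElem p} (hA : ∀ i, A i ∈ peirceTriangular F hp) :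
    evalTuple (fun i => peirceDiag F p (A i)) f = evalTuple A f := by
  refine evalTuple_eq_of_forall_ne_zero _ (fun i => p * A i * (1 - p)) fun t ht => ?_
  rw [← evalTuple_conj hf (peirceUnit hp (Units.mk0 t ht)) A]
  simp only [peirceUnit_conj (hA _), Units.val_mk0]

theorem exists_GL_mul_eq_mul_of_trace_eq {m ι : Type*} [Fintype m] [DecidableEq m] [CharZero F]
    {A B : ι → Matrix m m F}
    [IsSemisimpleRing (Algebra.adjoin F (Set.range fun i => (A i, B i)))]
    (htr : ∀ x ∈ Algebra.adjoin F (Set.range fun i => (A i, B i)), x.1.trace = x.2.trace) :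
    ∃ P : GL m F, ∀ i, P.val * A i = B i * P.val := by
  let D := Algebra.adjoin F (Set.range fun i => (A i, B i))
  let τ : Matrix m m F →ₐ[F] Module.End F (m → F) := Matrix.toLinAlgEquiv'.toAlgHom
  obtain ⟨φ, hφ⟩ := exists_linearEquiv_intertwining_of_trace_eq
    (τ.comp ((AlgHom.fst F _ _).comp D.val)) (τ.comp ((AlgHom.snd F _ _).comp D.val)) fun c =>
      (Matrix.trace_toLin'_eq _).trans ((htr c c.2).trans (Matrix.trace_toLin'_eq _).symm)
  refine ⟨⟨LinearMap.toMatrix' φ.toLinearMap, LinearMap.toMatrix' φ.symm.toLinearMap,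
    by simp [← LinearMap.toMatrix'_comp], by simp [← LinearMap.toMatrix'_comp]⟩,
    fun i => Matrix.ext_iff_mulVec.2 fun v => ?_⟩
  rw [← Matrix.mulVec_mulVec, ← Matrix.mulVec_mulVec, LinearMap.toMatrix'_mulVec,
    LinearMap.toMatrix'_mulVec]
  exact hφ ⟨_, Algebra.subset_adjoin (Set.mem_range_self i)⟩ v

theorem evalTuple_eq_of_trace_eq [CharZero F] (hf : IsSimConjInvariant F n r f)
    (A B : Fin r → Matrix (Fin n) (Fin n) F)
    (htr : ∀ x ∈ Algebra.adjoin F (Set.range fun i => (A i, B i)), x.1.trace = x.2.trace) :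
    evalTuple A f = evalTuple B f := by
  induction hd : Module.finrank F (Algebra.adjoin F (Set.range fun i => (A i, B i)))
    using Nat.strong_induction_on generalizing A B with
  | _ d ih =>
  by_cases hss : IsSemisimpleRing (Algebra.adjoin F (Set.range fun i => (A i, B i)))
  · obtain ⟨P, hP⟩ := exists_GL_mul_eq_mul_of_trace_eq htr
    exact evalTuple_eq_of_mul_eq_mul hf P hP
  obtain ⟨⟨p, q⟩, he, htri, x, hx, hx0, hxe⟩ := exists_peirce_of_not_isSemisimpleRing hss
  have hp : IsIdempotentElem p := congrArg Prod.fst he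
  have hq : IsIdempotentElem q := congrArg Prod.snd he
  have hAB (i : Fin r) : (A i, B i) ∈ peirceTriangular F he :=
    htri (Algebra.subset_adjoin (Set.mem_range_self i))
  have hA (i : Fin r) : A i ∈ peirceTriangular F hp :=
    mem_peirceTriangular.2 (congrArg Prod.fst (mem_peirceTriangular.1 (hAB i)))
  have hB (i : Fin r) : B i ∈ peirceTriangular F hq :=
    mem_peirceTriangular.2 (congrArg Prod.snd (mem_peirceTriangular.1 (hAB i)))
  have hlt := finrank_adjoin_range_peirceDiag_lt htri hx hx0 hxe
  have hle := adjoin_range_peirceDiag_le htri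
  simp only [peirceDiag_prod, hd] at hlt hle
  rw [← evalTuple_peirceDiag hf hA, ← evalTuple_peirceDiag hf hB]
  refine ih _ hlt _ _ (fun z hz => ?_) rfl
  obtain ⟨⟨X, Y⟩, hXY, rfl⟩ := hle hz
  rw [peirceDiag_prod, trace_peirceDiag hp, trace_peirceDiag hq]
  exact htr _ hXY

end Invariants

/-- If `H ⊆ F^{n²}` hits every nonzero difference
`f_ℓ(A,x) − f_ℓ(B,x)` (for all tuples `A`, `B` and all `ℓ ∈ {1,…,n²}`), then
`T_H` is a set of separating invariants: every element of `T_H` is an invariant, and two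
tuples are separated by some invariant iff they are separated by some member of `T_H`. -/
theorem TH_separating_invariants {F : Type*} [Field F] [CharZero F] (n r : ℕ)
    (H : Set (Fin (n ^ 2) → F))
    (hH : ∀ (A B : Fin r → Matrix (Fin n) (Fin n) F) (ℓ : ℕ)
        (_ : 1 ≤ ℓ) (h2 : ℓ ≤ n ^ 2),
      fpoly n r ℓ A - fpoly n r ℓ B ≠ 0 →
        ∃ α ∈ H,
          MvPolynomial.eval (fun j : Fin ℓ => α (Fin.castLE h2 j)) (fpoly n r ℓ A) ≠
            MvPolynomial.eval (fun j : Fin ℓ => α (Fin.castLE h2 j)) (fpoly n r ℓ B)) :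
    (∀ g ∈ TH F n r H, IsSimConjInvariant F n r g) ∧
      ∀ A B : Fin r → Matrix (Fin n) (Fin n) F,
        (∃ f, IsSimConjInvariant F n r f ∧ evalTuple A f ≠ evalTuple B f) ↔
          ∃ g ∈ TH F n r H, evalTuple A g ≠ evalTuple B g := by
  have hinv : ∀ g ∈ TH F n r H, IsSimConjInvariant F n r g := by
    rintro _ ⟨ℓ, -, h2, α, -, rfl⟩
    exact isSimConjInvariant_fAtPoint _
  refine ⟨hinv, fun A B => ⟨?_, fun ⟨g, hg, hne⟩ => ⟨g, hinv g hg, hne⟩⟩⟩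
  rintro ⟨f, hf, hne⟩
  by_contra! hTH
  have hfpoly (ℓ : ℕ) (h1 : 1 ≤ ℓ) (h2 : ℓ ≤ n ^ 2) : fpoly n r ℓ A = fpoly n r ℓ B := by
    by_contra hAB
    obtain ⟨α, hα, hsep⟩ := hH A B ℓ h1 h2 (sub_ne_zero.2 hAB)
    rw [eval_fpoly, eval_fpoly] at hsep
    exact hsep (hTH _ ⟨ℓ, h1, h2, α, hα, rfl⟩)
  have hwords (w : List (Fin r)) (hw : w.length ≤ Fintype.card (Fin n) ^ 2) :
      (w.map A).prod.trace = (w.map B).prod.trace := by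
    obtain rfl | hw0 := eq_or_ne w []
    · rfl
    · exact trace_prod_map_eq_of_fpoly_eq
        (hfpoly _ (List.length_pos_iff.2 hw0) (by simpa using hw))
  exact hne (evalTuple_eq_of_trace_eq hf A B (trace_fst_eq_trace_snd_of_words A B hwords))
end

section
/- Let F be a field and f ∈ F[x_1,…,x_n]. Suppose f = tr(M_1 M_2 ⋯ M_d), where each M_i is a w×w matrix whose entries are polynomials in F[x_1,…,x_n] of total degree at most 1. Let d' ≥ d be an integer such that the characteristic of F does not divide d'. Then there exists a matrix A of size (w·d')×(w·d') whose entries are polynomials in F[x_1,…,x_n] of total degree at most 1 such that f = tr(A^{d'}). -/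
/-!
Put the factors `N 0, …, N (m - 1)` on the edges `i → i + 1` of an `m`-cycle. The `m`-th power of
the resulting block matrix is block diagonal, and its blocks are the products of the factors read
cyclically from each starting point. These `m` products are cyclic rotations of one another, so
they have the same trace and the trace of the `m`-th power is `m • tr (N 0 ⋯ N (m - 1))`. Padding
the list of factors by identity matrices reaches length `m = d'`, and rescaling one factor by
`1 / d'` removes the multiplicity.
-/

open Matrix

section WeightedShift

variable {G S : Type*} [DecidableEq G]

/-- The weighted shift by `g` with weights `N`: the matrix with entry `N i` at `(i, i + g)` and
zeros elsewhere. For `G = ZMod m` and `g = 1` it is the weighted adjacency matrix of the directed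
`m`-cycle. The weights need not commute, so that they may themselves be matrices. -/
def weightedShift [Add G] [Zero S] (N : G → S) (g : G) : Matrix G G S :=
  Matrix.of fun i j => if j = i + g then N i else 0

theorem weightedShift_apply [Add G] [Zero S] (N : G → S) (g i j : G) :
    weightedShift N g i j = if j = i + g then N i else 0 :=
  rfl

theorem weightedShift_zero [AddZeroClass G] [Zero S] (N : G → S) :
    weightedShift N 0 = diagonal N := by
  ext i j
  simp only [weightedShift_apply, add_zero, diagonal_apply, eq_comm]

theorem weightedShift_mul [Fintype G] [AddSemigroup G] [NonUnitalNonAssocSemiring S]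
    (N N' : G → S) (g h : G) :
    weightedShift N g * weightedShift N' h =
      weightedShift (fun i => N i * N' (i + g)) (g + h) := by
  ext i j
  simp only [mul_apply, weightedShift_apply, ite_mul, zero_mul]
  rw [Fintype.sum_eq_single (i + g) fun x hx => if_neg hx]
  simp only [if_true, mul_ite, mul_zero, add_assoc]

theorem weightedShift_pow [Fintype G] [AddMonoid G] [Semiring S] (N : G → S) (g : G) (k : ℕ) :
    weightedShift N g ^ k =
      weightedShift (fun i => ((List.range k).map fun t => N (i + t • g)).prod) (k • g) := by
  induction k with
  | zero => simp [weightedShift_zero]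
  | succ k ih => simp only [pow_succ, ih, weightedShift_mul, List.prod_range_succ, succ_nsmul]

theorem trace_weightedShift_pow_of_nsmul_eq_zero [Fintype G] [AddMonoid G] [Semiring S]
    (N : G → S) {g : G} {k : ℕ} (hg : k • g = 0) :
    (weightedShift N g ^ k).trace =
      ∑ i, ((List.range k).map fun t => N (i + t • g)).prod := by
  rw [weightedShift_pow, hg, weightedShift_zero, trace_diagonal]

end WeightedShift

section Trace

variable {ι κ R : Type*} [Fintype ι] [Fintype κ]

theorem trace_comp [AddCommMonoid R] (M : Matrix κ κ (Matrix ι ι R)) :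
    (comp κ κ ι ι R M).trace = M.trace.trace := by
  calc (comp κ κ ι ι R M).trace = ∑ i, (M i i).trace := Fintype.sum_prod_type _
    _ = M.trace.trace := (trace_sum Finset.univ M.diag).symm

theorem trace_reindex [AddCommMonoid R] (e : ι ≃ κ) (M : Matrix ι ι R) :
    (reindex e e M).trace = M.trace :=
  e.symm.sum_comp M.diag

variable [DecidableEq ι] [CommSemiring R]

theorem trace_prod_map_range_add_of_periodic {f : ℕ → Matrix ι ι R} {m : ℕ}
    (hf : f.Periodic m) (s : ℕ) :
    ((List.range m).map fun t => f (s + t)).prod.trace = ((List.range m).map f).prod.trace := by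
  induction s with
  | zero => simp only [zero_add]
  | succ s ih =>
    rw [← ih]
    cases m with
    | zero => rfl
    | succ k =>
      have wrap : f (s + 1 + k) = f (s + 0) := by
        rw [add_zero, ← hf s, add_assoc, add_comm 1 k]
      rw [List.prod_range_succ, List.prod_range_succ', trace_mul_comm, wrap]
      simp only [Nat.succ_eq_add_one, add_assoc, add_comm 1]

theorem trace_trace_weightedShift_one_pow {m : ℕ} [NeZero m] (N : ZMod m → Matrix ι ι R) :
    (weightedShift N 1 ^ m).trace.trace =
      m • ((List.range m).map fun t : ℕ => N t).prod.trace := by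
  have periodic : Function.Periodic (fun t : ℕ => N t) m := fun t => by simp
  have rotate (i : ZMod m) : ((List.range m).map fun t => N (i + t • 1)).prod.trace =
      ((List.range m).map fun t : ℕ => N t).prod.trace := by
    simpa using trace_prod_map_range_add_of_periodic periodic i.val
  rw [trace_weightedShift_pow_of_nsmul_eq_zero N (by simp), trace_sum]
  simp only [rotate, Finset.sum_const, Finset.card_univ, ZMod.card]

end Trace

section ListProd

theorem prod_map_range_getD_one {S : Type*} [Monoid S] (l : List S) {m : ℕ} (hm : l.length ≤ m) :
    ((List.range m).map fun t => l.getD t 1).prod = l.prod := by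
  induction l generalizing m with
  | nil => simp
  | cons a l ih =>
    obtain ⟨k, rfl⟩ := Nat.exists_eq_add_of_le' (Nat.one_le_of_lt hm)
    simpa [List.prod_range_succ'] using congrArg (a * ·) (ih (Nat.le_of_succ_le_succ hm))

theorem prod_map_range_update_zero_smul {K S : Type*} [Monoid S] [SMul K S] [IsScalarTower K S S]
    (c : K) (f : ℕ → S) {m : ℕ} (hm : m ≠ 0) :
    ((List.range m).map (Function.update f 0 (c • f 0))).prod =
      c • ((List.range m).map f).prod := by
  obtain ⟨k, rfl⟩ := Nat.exists_eq_succ_of_ne_zero hm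
  simp [List.prod_range_succ', smul_mul_assoc]

end ListProd

section TraceOfPower

variable {R ι κ : Type*} [CommSemiring R]
  [Fintype ι] [DecidableEq ι] [Fintype κ] [DecidableEq κ]

theorem exists_trace_pow_eq_nsmul_trace_prod {V : Set R} (hzero : 0 ∈ V) {m : ℕ} [NeZero m]
    (hκ : Fintype.card κ = Fintype.card ι * m) (L : ℕ → Matrix ι ι R)
    (hL : ∀ t a b, L t a b ∈ V) :
    ∃ A : Matrix κ κ R, (∀ a b, A a b ∈ V) ∧
      (A ^ m).trace = m • ((List.range m).map L).prod.trace := by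
  let N : ZMod m → Matrix ι ι R := fun z => L z.val
  let e : ZMod m × ι ≃ κ := Fintype.equivOfCardEq (by simp [hκ, ZMod.card, mul_comm])
  refine ⟨reindexRingEquiv R e (compRingEquiv (ZMod m) ι R (weightedShift N 1)), ?_, ?_⟩
  · intro a b
    simp only [coe_reindexRingEquiv, reindex_apply, submatrix_apply, compRingEquiv_apply,
      comp_apply, weightedShift_apply]
    split_ifs
    exacts [hL _ _ _, hzero]
  · have restrict : (List.range m).map (fun t : ℕ => N t) = (List.range m).map L :=
      List.map_congr_left fun t ht => by
        simp only [N, ZMod.val_cast_of_lt (List.mem_range.mp ht)]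
    rw [← map_pow, ← map_pow, coe_reindexRingEquiv, trace_reindex, compRingEquiv_apply,
      trace_comp, trace_trace_weightedShift_one_pow, restrict]

/-- `V` plays the role of the space of affine forms. -/
theorem abp_to_trace_of_matrix_power_general {K : Type*} [CommSemiring K] [Algebra K R]
    (V : Submodule K R) (hone : 1 ∈ V)
    (l : List (Matrix ι ι R)) (hl : ∀ M ∈ l, ∀ a b, M a b ∈ V)
    {m : ℕ} (hm : l.length ≤ m) (hunit : IsUnit (m : K))
    (hκ : Fintype.card κ = Fintype.card ι * m) :
    ∃ A : Matrix κ κ R, (∀ a b, A a b ∈ V) ∧ l.prod.trace = (A ^ m).trace := by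
  obtain ⟨c, hc⟩ := hunit.exists_right_inv
  rcases eq_or_ne m 0 with rfl | hm0
  · have : Subsingleton K := subsingleton_of_zero_eq_one (by simpa using hc)
    have : Subsingleton R := Module.subsingleton K R
    exact ⟨0, fun _ _ => V.zero_mem, Subsingleton.elim _ _⟩
  have : NeZero m := ⟨hm0⟩
  let P : ℕ → Matrix ι ι R := fun t => l.getD t 1
  have hP (t : ℕ) (a b : ι) : P t a b ∈ V := by
    rcases lt_or_ge t l.length with ht | ht
    · simpa [P, ht] using hl _ (l.getElem_mem ht) a b
    · simp only [P, List.getD_eq_default _ _ ht, one_apply]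
      split_ifs
      exacts [hone, V.zero_mem]
  have hL (t : ℕ) (a b : ι) : Function.update P 0 (c • P 0) t a b ∈ V := by
    rcases eq_or_ne t 0 with rfl | ht
    · simpa using V.smul_mem c (hP 0 a b)
    · simpa [ht] using hP t a b
  obtain ⟨A, hA, htrace⟩ := exists_trace_pow_eq_nsmul_trace_prod V.zero_mem hκ _ hL
  refine ⟨A, hA, ?_⟩
  rw [htrace, prod_map_range_update_zero_smul c P hm0, prod_map_range_getD_one l hm, trace_smul,
    ← Nat.cast_smul_eq_nsmul K, smul_smul, hc, one_smul]

end TraceOfPower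

/-- If `f = tr(M_1 ⋯ M_d)` for `w×w` matrices `M_i` of affine forms
(entries of total degree ≤ 1), and `d' ≥ d` is not divisible by the characteristic of
`F`, then `f = tr(A^{d'})` for some `(wd')×(wd')` matrix `A` of affine forms. -/
theorem abp_to_trace_of_matrix_power {F : Type*} [Field F] (n w d : ℕ)
    (f : MvPolynomial (Fin n) F)
    (M : Fin d → Matrix (Fin w) (Fin w) (MvPolynomial (Fin n) F))
    (hM : ∀ (i : Fin d) (a b : Fin w), (M i a b).totalDegree ≤ 1)
    (hf : f = Matrix.trace (List.ofFn M).prod)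
    (d' : ℕ) (hd' : d ≤ d') (hchar : ¬ (ringChar F ∣ d')) :
    ∃ A : Matrix (Fin (w * d')) (Fin (w * d')) (MvPolynomial (Fin n) F),
      (∀ a b, (A a b).totalDegree ≤ 1) ∧ f = Matrix.trace (A ^ d') := by
  have hunit : IsUnit (d' : F) := isUnit_iff_ne_zero.mpr fun h => hchar ((ringChar.spec F d').mp h)
  simpa [MvPolynomial.mem_restrictTotalDegree, hf] using abp_to_trace_of_matrix_power_general
    (MvPolynomial.restrictTotalDegree (Fin n) F 1) (κ := Fin (w * d'))
    (by simp [MvPolynomial.mem_restrictTotalDegree]) (List.ofFn M)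
    (by simpa [MvPolynomial.mem_restrictTotalDegree] using hM) (by simpa using hd') hunit (by simp)
end

section
/- Let F be a field, f ∈ F[y_1,…,y_n], and let L = (L_1,…,L_n) be a tuple of polynomials in F[x_1,…,x_m], each of total degree at most 1. Then |∂(f(L_1,…,L_n))| ≤ |∂(f)|, where f(L_1,…,L_n) ∈ F[x_1,…,x_m] is the polynomial obtained by substituting L_i for y_i in f. -/
/-- The `k`-th Hasse derivative of `f` in direction `u`: the coefficient of `y^k` in
`f(x_1 + u_1 y, …, x_m + u_m y)`. -/
noncomputable def hasseDeriv {R : Type*} [CommRing R] {m : ℕ} (u : Fin m → R) (k : ℕ)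
    (f : MvPolynomial (Fin m) R) : MvPolynomial (Fin m) R :=
  ((MvPolynomial.aeval fun i : Fin m =>
      Polynomial.C (MvPolynomial.X i) + Polynomial.C (MvPolynomial.C (u i)) * Polynomial.X)
    f).coeff k

/-- `∂_{x_j^k}`, the `k`-th Hasse derivative with respect to the variable `x_j`. -/
noncomputable def hasseDerivAt {R : Type*} [CommRing R] {m : ℕ} (j : Fin m) (k : ℕ) :
    MvPolynomial (Fin m) R → MvPolynomial (Fin m) R :=
  hasseDeriv (Pi.single j (1 : R)) k

/-- `∂_{x^i} := ∂_{x_1^{i_1}} ∘ ⋯ ∘ ∂_{x_m^{i_m}}` for a multi-index `i`. -/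
noncomputable def multiHasseDeriv {R : Type*} [CommRing R] {m : ℕ} (i : Fin m → ℕ)
    (f : MvPolynomial (Fin m) R) : MvPolynomial (Fin m) R :=
  List.foldr (fun j g => hasseDerivAt j (i j) g) f (List.finRange m)

/-- `|∂(f)|`, the dimension of the span of all iterated Hasse derivatives
`∂_{x^i}(f)`, `i ∈ ℕ^m`. -/
noncomputable def hasseDim {F : Type*} [Field F] {m : ℕ} (f : MvPolynomial (Fin m) F) : ℕ :=
  Module.finrank F
    (Submodule.span F (Set.range fun i : Fin m → ℕ => multiHasseDeriv i f))

/-!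
The Hasse derivatives of `f` are the coefficients, with respect to `y`, of the Taylor expansion
`f(x + y)`. An affine form `L i` with linear part `M i` satisfies `L i (x + y) = L i (x) + M i (y)`,
so expanding `f` around `L(x)` gives `f(L(x + y)) = ∑ d, (∂_d f)(L(x)) * M(y) ^ d`. The factors
`M(y) ^ d` do not involve `x`, so comparing coefficients of `y` writes each Hasse derivative of
`f ∘ L` as a linear combination, with scalar coefficients, of the polynomials `(∂_d f) ∘ L`. Hence
the Hasse derivatives of `f ∘ L` lie in the image of the span of those of `f` under the
substitution `L`.
-/

open MvPolynomial

section Taylor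

variable {σ τ R : Type*} [CommSemiring R]

/-- The multivariate Taylor expansion `f(x) ↦ f(x + y)`: the variables `x` live in the coefficient
ring, and the outer variables are the increments `y`. -/
noncomputable def mvTaylor : MvPolynomial σ R →ₐ[R] MvPolynomial σ (MvPolynomial σ R) :=
  aeval fun i => C (X i) + X i

/-- The `R`-span of the Taylor coefficients of `f`, which are its Hasse derivatives. Unlike the
iterated derivatives of `multiHasseDeriv`, it makes sense for any type of variables. -/
noncomputable def taylorSpan (f : MvPolynomial σ R) : Submodule R (MvPolynomial σ R) :=
  Submodule.span R (Set.range fun d => coeff d (mvTaylor f))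

@[simp]
lemma mvTaylor_X (i : σ) : mvTaylor (X i : MvPolynomial σ R) = C (X i) + X i :=
  aeval_X _ i

@[simp]
lemma mvTaylor_C (a : R) : mvTaylor (C a : MvPolynomial σ R) = C (C a) :=
  aeval_C _ a

lemma sum_range_homogeneousComponent {p : MvPolynomial σ R} {n : ℕ} (hp : p.totalDegree < n) :
    ∑ i ∈ Finset.range n, homogeneousComponent i p = p := by
  refine Eq.trans (Eq.symm ?_) (sum_homogeneousComponent p)
  refine Finset.sum_subset (Finset.range_mono hp) fun i _ hi => homogeneousComponent_eq_zero i p ?_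
  simpa only [Finset.mem_range, Nat.lt_succ_iff, not_le] using hi

lemma mvTaylor_of_isHomogeneous_one {p : MvPolynomial σ R} (hp : p.IsHomogeneous 1) :
    mvTaylor p = C p + map C p := by
  rw [← mem_homogeneousSubmodule, homogeneousSubmodule_one_eq_span_X] at hp
  induction hp using Submodule.span_induction with
  | mem p hp =>
    obtain ⟨i, rfl⟩ := hp
    rw [mvTaylor_X, map_X]
  | zero => simp only [map_zero, add_zero]
  | add p q _ _ hp hq => rw [map_add, hp, hq, map_add, map_add, add_add_add_comm]
  | smul a p _ hp => simp only [smul_eq_C_mul, map_mul, mvTaylor_C, map_C, hp, mul_add]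

lemma mvTaylor_of_totalDegree_le_one {p : MvPolynomial σ R} (hp : p.totalDegree ≤ 1) :
    mvTaylor p = C p + map C (homogeneousComponent 1 p) := by
  have hdecomp : C (coeff 0 p) + homogeneousComponent 1 p = p := by
    rw [← homogeneousComponent_zero, ← Finset.sum_range_one (homogeneousComponent · p),
      ← Finset.sum_range_succ, sum_range_homogeneousComponent (Nat.lt_succ_of_le hp)]
  calc mvTaylor p = mvTaylor (C (coeff 0 p)) + mvTaylor (homogeneousComponent 1 p) := by
        rw [← map_add, hdecomp]
    _ = C (C (coeff 0 p) + homogeneousComponent 1 p) + map C (homogeneousComponent 1 p) := by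
        rw [mvTaylor_C, mvTaylor_of_isHomogeneous_one (homogeneousComponent_isHomogeneous 1 p),
          map_add, add_assoc]
    _ = C p + map C (homogeneousComponent 1 p) := by rw [hdecomp]

lemma mvTaylor_aeval {L M : σ → MvPolynomial τ R}
    (hLM : ∀ i, mvTaylor (L i) = C (L i) + map C (M i)) (f : MvPolynomial σ R) :
    mvTaylor (aeval L f) =
      eval₂ (C.comp (aeval L).toRingHom) (fun i => map C (M i)) (mvTaylor f) := by
  induction f using MvPolynomial.induction_on with
  | C a => simp
  | add p q hp hq => simp only [map_add, eval₂_add, hp, hq]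
  | mul_X p i hp =>
    rw [map_mul, map_mul, map_mul, eval₂_mul, hp, aeval_X, hLM, mvTaylor_X]
    simp

lemma taylorSpan_aeval_le_map {L M : σ → MvPolynomial τ R}
    (hLM : ∀ i, mvTaylor (L i) = C (L i) + map C (M i)) (f : MvPolynomial σ R) :
    taylorSpan (aeval L f) ≤ (taylorSpan f).map (aeval L).toLinearMap := by
  rw [taylorSpan, Submodule.span_le]
  rintro _ ⟨d, rfl⟩
  simp only [mvTaylor_aeval hLM, eval₂_eq, coeff_sum]
  refine Submodule.sum_mem _ fun e _ => ?_
  have hscalar : coeff d (∏ i ∈ e.support, map C (M i) ^ e i) =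
      (C (coeff d (∏ i ∈ e.support, M i ^ e i)) : MvPolynomial τ R) := by
    simp only [← map_pow, ← map_prod, coeff_map]
  rw [RingHom.comp_apply, coeff_C_mul, hscalar, mul_comm, ← smul_eq_C_mul]
  exact Submodule.smul_mem _ _ (Submodule.mem_map_of_mem (Submodule.subset_span ⟨e, rfl⟩))

instance taylorSpan.finite (f : MvPolynomial σ R) : Module.Finite R (taylorSpan f) :=
  Module.Finite.span_of_finite R <| Finsupp.finite_range (AddMonoidAlgebra.coeff (mvTaylor f))

lemma coeff_prod_aeval_X [Fintype σ] (p : σ → Polynomial R) (d : σ →₀ ℕ) :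
    coeff d (∏ i, Polynomial.aeval (X i : MvPolynomial σ R) (p i)) = ∏ i, (p i).coeff (d i) := by
  classical
  have hd (e : σ → ℕ) : d = Finsupp.indicator Finset.univ (fun i _ => e i) ↔ ⇑d = e := by
    rw [DFunLike.ext_iff, funext_iff]
    simp
  simp only [Polynomial.aeval_eq_sum_range, Finset.prod_univ_sum, Algebra.smul_def, coeff_sum,
    Finset.prod_mul_distrib, ← map_prod, algebraMap_eq, coeff_C_mul, coeff_prod_X_pow, hd,
    mul_ite, mul_one, mul_zero, Finset.sum_ite_eq]
  refine ite_eq_left_iff.2 fun hmem => ?_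
  simp only [Fintype.mem_piFinset, Finset.mem_range, not_forall, not_lt] at hmem
  obtain ⟨i, hi⟩ := hmem
  exact (Finset.prod_eq_zero (Finset.mem_univ i)
    (Polynomial.coeff_eq_zero_of_natDegree_lt hi)).symm

lemma coeff_mvTaylor_monomial [Fintype σ] (d s : σ →₀ ℕ) (a : R) :
    coeff d (mvTaylor (monomial s a)) = monomial (s - d) (a * ∏ i, ((s i).choose (d i) : R)) := by
  have hfactor (i : σ) : (C (X i) + X i : MvPolynomial σ (MvPolynomial σ R)) ^ s i =
      Polynomial.aeval (X i) ((Polynomial.X + Polynomial.C (X i : MvPolynomial σ R)) ^ s i) := by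
    simp [add_comm]
  rw [mvTaylor, aeval_monomial, Finsupp.prod_fintype _ _ fun i => pow_zero _]
  simp only [hfactor]
  rw [MvPolynomial.algebraMap_apply, coeff_C_mul, coeff_prod_aeval_X]
  simp only [Polynomial.coeff_X_add_C_pow, Finset.prod_mul_distrib]
  rw [monomial_eq, Finsupp.prod_fintype _ _ fun i => pow_zero _]
  simp [mul_assoc, mul_comm, algebraMap_eq]

end Taylor

section HasseDerivative

variable {R : Type*} [CommRing R] {m : ℕ}

lemma hasseDerivAt_add (j : Fin m) (k : ℕ) (f g : MvPolynomial (Fin m) R) :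
    hasseDerivAt j k (f + g) = hasseDerivAt j k f + hasseDerivAt j k g := by
  simp only [hasseDerivAt, hasseDeriv, map_add, Polynomial.coeff_add]

lemma hasseDerivAt_monomial (j : Fin m) (k : ℕ) (s : Fin m →₀ ℕ) (a : R) :
    hasseDerivAt j k (monomial s a) =
      monomial (s - Finsupp.single j k) (a * ((s j).choose k : R)) := by
  have hprod : (s.prod fun i e => (Polynomial.C (X i : MvPolynomial (Fin m) R) +
      Polynomial.C (C ((Pi.single j 1 : Fin m → R) i)) * Polynomial.X) ^ e) =
      (Polynomial.X + Polynomial.C (X j)) ^ s j * Polynomial.C (monomial (s.erase j) 1) := by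
    rw [← Finsupp.mul_prod_erase' s j _ fun i => pow_zero _, monomial_eq, C_1, one_mul,
      Finsupp.prod, Finsupp.prod, map_prod]
    congr 1
    · simp [add_comm]
    · refine Finset.prod_congr rfl fun i hi => ?_
      have hij : i ≠ j := by rintro rfl; simp at hi
      simp [hij]
  have hexponent : s - Finsupp.single j k = Finsupp.single j (s j - k) + s.erase j := by
    ext i
    rcases eq_or_ne i j with rfl | hij
    · simp
    · simp [hij]
  rw [hasseDerivAt, hasseDeriv, aeval_monomial, hprod,
    IsScalarTower.algebraMap_apply R (MvPolynomial (Fin m) R), ← Polynomial.C_eq_algebraMap,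
    Polynomial.coeff_C_mul, Polynomial.coeff_mul_C, Polynomial.coeff_X_add_C_pow,
    MvPolynomial.algebraMap_eq, X_pow_eq_monomial, ← C_eq_coe_nat, hexponent]
  simp only [C_apply, monomial_mul, zero_add, add_zero, one_mul, mul_one]

lemma multiHasseDeriv_add (i : Fin m → ℕ) (f g : MvPolynomial (Fin m) R) :
    multiHasseDeriv i (f + g) = multiHasseDeriv i f + multiHasseDeriv i g := by
  simp only [multiHasseDeriv]
  induction List.finRange m with
  | nil => rfl
  | cons j l ih => simp only [List.foldr_cons, ih, hasseDerivAt_add]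

lemma foldr_hasseDerivAt_monomial (d s : Fin m →₀ ℕ) (a : R) {l : List (Fin m)} (hl : l.Nodup) :
    l.foldr (fun j g => hasseDerivAt j (d j) g) (monomial s a) =
      monomial (s - d.filter (· ∈ l)) (a * (l.map fun j => ((s j).choose (d j) : R)).prod) := by
  induction l with
  | nil => simp [(Finsupp.filter_eq_zero_iff (fun _ => False) d).2]
  | cons j l ih =>
    obtain ⟨hj, hl⟩ := List.nodup_cons.mp hl
    have hexponent : s - d.filter (· ∈ l) - Finsupp.single j (d j) =
        s - d.filter (· ∈ j :: l) := by
      ext i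
      rcases eq_or_ne i j with rfl | hij
      · simp [hj]
      · simp [Finsupp.filter_apply, hij]
    have hunchanged : (s - d.filter (· ∈ l)) j = s j := by simp [hj]
    rw [List.foldr_cons, ih hl, hasseDerivAt_monomial, hexponent, hunchanged, List.map_cons,
      List.prod_cons, mul_assoc, mul_comm (List.prod _)]

lemma multiHasseDeriv_eq_coeff_mvTaylor (d : Fin m →₀ ℕ) (f : MvPolynomial (Fin m) R) :
    multiHasseDeriv d f = coeff d (mvTaylor f) := by
  induction f using MvPolynomial.induction_on' with
  | add p q hp hq => rw [multiHasseDeriv_add, map_add, coeff_add, hp, hq]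
  | monomial s a =>
    rw [multiHasseDeriv, foldr_hasseDerivAt_monomial d s a (List.nodup_finRange m),
      coeff_mvTaylor_monomial, Fin.prod_univ_def]
    have hfilter : d.filter (· ∈ List.finRange m) = d :=
      (Finsupp.filter_eq_self_iff _ d).2 fun j _ => List.mem_finRange j
    rw [hfilter]

lemma span_multiHasseDeriv (f : MvPolynomial (Fin m) R) :
    Submodule.span R (Set.range fun i : Fin m → ℕ => multiHasseDeriv i f) = taylorSpan f := by
  rw [taylorSpan, ← Finsupp.equivFunOnFinite.surjective.range_comp]
  exact congrArg (Submodule.span R <| Set.range ·) (funext (multiHasseDeriv_eq_coeff_mvTaylor · f))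

lemma hasseDim_eq_finrank_taylorSpan {F : Type*} [Field F] (f : MvPolynomial (Fin m) F) :
    hasseDim f = Module.finrank F (taylorSpan f) := by
  rw [hasseDim, span_multiHasseDeriv]

end HasseDerivative

theorem hasseDim_aeval_affine_le_general {σ τ R : Type*} [CommSemiring R] [StrongRankCondition R]
    (f : MvPolynomial σ R) (L : σ → MvPolynomial τ R) (hL : ∀ i, (L i).totalDegree ≤ 1) :
    Module.finrank R (taylorSpan (aeval L f)) ≤ Module.finrank R (taylorSpan f) :=
  calc Module.finrank R (taylorSpan (aeval L f))
      ≤ Module.finrank R ((taylorSpan f).map (aeval L).toLinearMap) :=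
        Submodule.finrank_mono <|
          taylorSpan_aeval_le_map (fun i => mvTaylor_of_totalDegree_le_one (hL i)) f
    _ ≤ Module.finrank R (taylorSpan f) := Submodule.finrank_map_le _ _

/-- Substituting affine forms (total degree ≤ 1) into `f` does not
increase the dimension of Hasse derivatives: `|∂(f(L_1,…,L_n))| ≤ |∂(f)|`. -/
theorem hasseDim_aeval_affine_le {F : Type*} [Field F] {n m : ℕ}
    (f : MvPolynomial (Fin n) F) (L : Fin n → MvPolynomial (Fin m) F)
    (hL : ∀ i, (L i).totalDegree ≤ 1) :
    hasseDim (MvPolynomial.aeval L f) ≤ hasseDim f := by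
  simpa only [hasseDim_eq_finrank_taylorSpan] using hasseDim_aeval_affine_le_general f L hL
end
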